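/- arXiv:math/0609603 — 2 statements merged into one kernel-verified Lean document; each statement's English description precedes it below -/
import Mathlib

section
/- Let k ≥ 2 be an integer, L ∈ ℝ, and ε ∈ (2/5, 1/2). Then as t → 0⁺, ∫₀^{t^ε} (e^{−r²/t} + L r² t^{−1/2} ∫_{r t^{−1/2}}^∞ e^{−η²} dη)^k (1 − r L) dr = (1/2)(π t / k)^{1/2} + t L { −1/(2k) + (k/2)( π/(4(k−1)^{3/2}) − 1/(2k(k−1)) − arctan((k−1)^{−1/2})/(2(k−1)^{3/2}) ) } + o(t). -/
open MeasureTheory Filter Topology Real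

/-- The Gaussian tail integral, a multiple of the complementary error function. -/
noncomputable def gaussTail (u : ℝ) : ℝ := ∫ η in Set.Ioi u, Real.exp (-η ^ 2)

lemma integrable_exp_neg_sq : Integrable (fun x : ℝ => Real.exp (-x ^ 2)) := by
  simpa using integrable_exp_neg_mul_sq (b := 1) one_pos

lemma gaussTail_nonneg (u : ℝ) : 0 ≤ gaussTail u :=
  integral_nonneg fun _ => (Real.exp_pos _).le

lemma continuous_gaussTail : Continuous gaussTail := by
  have h : gaussTail = fun u => gaussTail 0 - ∫ η in (0:ℝ)..u, Real.exp (-η ^ 2) := by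
    funext u
    have := intervalIntegral.integral_interval_add_Ioi (a := 0) (b := u)
      integrable_exp_neg_sq.integrableOn integrable_exp_neg_sq.integrableOn
    simp only [gaussTail]
    linarith
  rw [h]
  exact continuous_const.sub
    (intervalIntegral.continuous_primitive (fun _ _ => integrable_exp_neg_sq.intervalIntegrable) 0)

lemma gaussTail_le {u : ℝ} (hu : 0 ≤ u) : gaussTail u ≤ √π * Real.exp (-u ^ 2) := by
  have hint : Integrable (fun η : ℝ => Real.exp (-(η - u) ^ 2)) :=
    integrable_exp_neg_sq.comp_sub_right u
  have htot : ∫ η : ℝ, Real.exp (-(η - u) ^ 2) = √π := by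
    rw [integral_sub_right_eq_self (fun η : ℝ => Real.exp (-η ^ 2)) u]
    simpa using integral_gaussian 1
  calc gaussTail u
      ≤ ∫ η in Set.Ioi u, Real.exp (-(η - u) ^ 2) * Real.exp (-u ^ 2) := by
        refine setIntegral_mono_on integrable_exp_neg_sq.integrableOn
          (hint.mul_const _).integrableOn measurableSet_Ioi fun η hη => ?_
        rw [← Real.exp_add, Real.exp_le_exp]
        nlinarith [mul_nonneg hu (sub_nonneg.2 (le_of_lt (Set.mem_Ioi.1 hη)))]
    _ ≤ ∫ η : ℝ, Real.exp (-(η - u) ^ 2) * Real.exp (-u ^ 2) :=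
        setIntegral_le_integral (hint.mul_const _)
          (Eventually.of_forall fun _ => by positivity)
    _ = √π * Real.exp (-u ^ 2) := by rw [integral_mul_const, htot]

lemma integrable_pow_mul_exp_neg_mul_sq {b : ℝ} (hb : 0 < b) (n : ℕ) :
    Integrable (fun x : ℝ => x ^ n * Real.exp (-b * x ^ 2)) := by
  simpa using integrable_rpow_mul_exp_neg_mul_sq hb (s := n) (by linarith [n.cast_nonneg (α := ℝ)])

lemma integrable_eval_mul_exp_neg_mul_sq {b : ℝ} (hb : 0 < b) (p : Polynomial ℝ) :
    Integrable (fun x : ℝ => p.eval x * Real.exp (-b * x ^ 2)) := by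
  induction p using Polynomial.induction_on' with
  | add p q hp hq =>
    simp only [Polynomial.eval_add, add_mul]
    exact hp.add hq
  | monomial n c =>
    simpa [mul_assoc] using (integrable_pow_mul_exp_neg_mul_sq hb n).const_mul c

lemma integral_id_mul_exp_neg_mul_sq {b : ℝ} (hb : 0 < b) :
    ∫ u in Set.Ioi (0:ℝ), u * Real.exp (-b * u ^ 2) = 1 / (2 * b) := by
  have h := integral_rpow_mul_exp_neg_mul_rpow (p := 2) (q := 1) (b := b) two_pos (by norm_num) hb
  norm_num [Real.rpow_neg_one] at h
  simp only [neg_mul]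
  rw [h]
  field_simp

lemma integral_pow_three_mul_exp_neg_mul_sq {b : ℝ} (hb : 0 < b) :
    ∫ u in Set.Ioi (0:ℝ), u ^ 3 * Real.exp (-b * u ^ 2) = 1 / (2 * b ^ 2) := by
  have h := integral_rpow_mul_exp_neg_mul_rpow (p := 2) (q := 3) (b := b) two_pos (by norm_num) hb
  have e1 : (-(3 + 1) / 2 : ℝ) = -((2:ℕ):ℝ) := by norm_num
  rw [e1, Real.rpow_neg hb.le, Real.rpow_natCast] at h
  norm_num [Real.Gamma_two] at h
  norm_cast at h
  simp only [neg_mul]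
  rw [h]
  field_simp

lemma gaussTail_eq_mul_integral {u : ℝ} (hu : 0 < u) :
    gaussTail u = ∫ τ in Set.Ioi (1:ℝ), u * Real.exp (-(u * τ) ^ 2) := by
  rw [integral_const_mul, integral_comp_mul_left_Ioi (fun η => Real.exp (-η ^ 2)) 1 hu]
  simp [gaussTail, hu.ne']

lemma hasDerivAt_antideriv_inv_add_sq_sq {a : ℝ} (ha : 0 < a) (x : ℝ) :
    HasDerivAt (fun τ : ℝ => 1 / 2 * (τ / (2 * a * (a + τ ^ 2))
      + Real.arctan (τ / √a) / (2 * (a * √a)))) (1 / (2 * (a + x ^ 2) ^ 2)) x := by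
  have hs : 0 < √a := Real.sqrt_pos.2 ha
  have hx : 0 < a + x ^ 2 := by positivity
  have h1 : HasDerivAt (fun τ : ℝ => 2 * a * (a + τ ^ 2)) (2 * a * (2 * x)) x := by
    simpa using (((hasDerivAt_id x).pow 2).const_add a).const_mul (2 * a)
  have h2 := (hasDerivAt_id x).div h1 (by positivity)
  have h3 := (((hasDerivAt_id x).div_const (√a)).arctan).div_const (2 * (a * √a))
  refine ((h2.add h3).const_mul (1 / 2)).congr_deriv ?_
  have hsq : √a ^ 2 = a := Real.sq_sqrt ha.le
  simp only [id, div_pow, hsq]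
  have h4 : 1 + x ^ 2 / a = (a + x ^ 2) / a := by field_simp
  rw [h4]
  have h5 : 1 / ((a + x ^ 2) / a) * (1 / √a) / (2 * (a * √a)) = 1 / (2 * a * (a + x ^ 2)) := by
    field_simp
    rw [hsq]
  rw [h5]
  field_simp
  ring

lemma tendsto_antideriv_inv_add_sq_sq {a : ℝ} (ha : 0 < a) :
    Tendsto (fun τ : ℝ => 1 / 2 * (τ / (2 * a * (a + τ ^ 2))
      + Real.arctan (τ / √a) / (2 * (a * √a)))) atTop
      (𝓝 (1 / 2 * (0 + π / 2 / (2 * (a * √a))))) := by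
  refine Tendsto.const_mul _ (Tendsto.add ?_ (Tendsto.div_const ?_ _))
  · have hb : Tendsto (fun τ : ℝ => (2 * a)⁻¹ * τ⁻¹) atTop (𝓝 0) := by
      simpa using tendsto_inv_atTop_zero.const_mul ((2 * a)⁻¹)
    refine squeeze_zero' ?_ ?_ hb
    · filter_upwards [eventually_gt_atTop 0] with τ hτ
      positivity
    · filter_upwards [eventually_gt_atTop 0] with τ hτ
      rw [← mul_inv, div_le_iff₀ (by positivity), inv_mul_eq_div, le_div_iff₀ (by positivity)]
      nlinarith [mul_pos ha ha]
  · exact (tendsto_nhds_of_tendsto_nhdsWithin Real.tendsto_arctan_atTop).comp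
      (tendsto_id.atTop_div_const (Real.sqrt_pos.2 ha))

lemma integrableOn_inv_add_sq_sq {a : ℝ} (ha : 0 < a) :
    IntegrableOn (fun τ : ℝ => 1 / (2 * (a + τ ^ 2) ^ 2)) (Set.Ioi 1) :=
  integrableOn_Ioi_deriv_of_nonneg' (fun x _ => hasDerivAt_antideriv_inv_add_sq_sq ha x)
    (fun _ _ => by positivity) (tendsto_antideriv_inv_add_sq_sq ha)

lemma integral_inv_add_sq_sq {a : ℝ} (ha : 0 < a) :
    ∫ τ in Set.Ioi (1:ℝ), 1 / (2 * (a + τ ^ 2) ^ 2) =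
      1 / 2 * (π / (4 * (a * √a)) - 1 / (2 * (a + 1) * a)
        - Real.arctan (1 / √a) / (2 * (a * √a))) := by
  rw [integral_Ioi_of_hasDerivAt_of_nonneg' (fun x _ => hasDerivAt_antideriv_inv_add_sq_sq ha x)
    (fun _ _ => by positivity) (tendsto_antideriv_inv_add_sq_sq ha)]
  have hs : 0 < √a := Real.sqrt_pos.2 ha
  field_simp
  ring

lemma integral_sq_mul_exp_mul_gaussTail {a : ℝ} (ha : 0 < a) :
    ∫ u in Set.Ioi (0:ℝ), u ^ 2 * Real.exp (-a * u ^ 2) * gaussTail u =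
      1 / 2 * (π / (4 * (a * √a)) - 1 / (2 * (a + 1) * a)
        - Real.arctan (1 / √a) / (2 * (a * √a))) := by
  have hinner (τ : ℝ) : ∫ u in Set.Ioi (0:ℝ), u ^ 3 * Real.exp (-(a + τ ^ 2) * u ^ 2) =
      1 / (2 * (a + τ ^ 2) ^ 2) :=
    integral_pow_three_mul_exp_neg_mul_sq (by positivity)
  have hint : Integrable
      (Function.uncurry fun τ u : ℝ => u ^ 3 * Real.exp (-(a + τ ^ 2) * u ^ 2))
      ((volume.restrict (Set.Ioi (1:ℝ))).prod (volume.restrict (Set.Ioi (0:ℝ)))) := by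
    have hc : Continuous
        (Function.uncurry fun τ u : ℝ => u ^ 3 * Real.exp (-(a + τ ^ 2) * u ^ 2)) := by
      unfold Function.uncurry
      fun_prop
    rw [integrable_prod_iff hc.aestronglyMeasurable]
    refine ⟨Eventually.of_forall fun τ => (integrable_pow_mul_exp_neg_mul_sq
      (b := a + τ ^ 2) (by positivity) 3).integrableOn.integrable, ?_⟩
    refine (integrableOn_inv_add_sq_sq ha).congr (Eventually.of_forall fun τ => ?_)
    simp only [Function.uncurry]
    rw [← hinner τ]
    refine setIntegral_congr_fun measurableSet_Ioi fun u hu => ?_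
    have hu : 0 < u := hu
    exact (Real.norm_of_nonneg (by positivity)).symm
  rw [← integral_inv_add_sq_sq ha]
  simp_rw [← hinner]
  rw [integral_integral_swap hint]
  refine setIntegral_congr_fun measurableSet_Ioi fun u hu => ?_
  rw [gaussTail_eq_mul_integral hu, ← integral_const_mul]
  refine integral_congr_ae (Eventually.of_forall fun τ => ?_)
  have : Real.exp (-(a + τ ^ 2) * u ^ 2) = Real.exp (-a * u ^ 2) * Real.exp (-(u * τ) ^ 2) := by
    rw [← Real.exp_add]
    ring_nf
  simp only [this]
  ring

/-- The integrand after rescaling the normal coordinate by `s = √t`. -/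
noncomputable def scaledIntegrand (k : ℕ) (L s u : ℝ) : ℝ :=
  (Real.exp (-u ^ 2) + s * (L * u ^ 2 * gaussTail u)) ^ k * (1 - s * (u * L))

lemma continuous_scaledIntegrand (k : ℕ) (L s : ℝ) : Continuous (scaledIntegrand k L s) := by
  have := continuous_gaussTail
  unfold scaledIntegrand
  fun_prop

lemma abs_scaledIntegrand_sub_le (k : ℕ) (L : ℝ) {s u : ℝ} (hs0 : 0 ≤ s) (hs1 : s ≤ 1)
    (hu : 0 ≤ u) :
    |scaledIntegrand k L s u - Real.exp (-u ^ 2) ^ k| ≤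
      s * ((|L| * √π * u ^ 2 * k * (1 + |L| * √π * u ^ 2) ^ k
        + |L| * u * (1 + |L| * √π * u ^ 2) ^ k) * Real.exp (-u ^ 2) ^ k) := by
  set f := Real.exp (-u ^ 2) with hf
  have hf0 : 0 < f := Real.exp_pos _
  set N := |L| * √π * u ^ 2 with hN
  have hN0 : 0 ≤ N := by positivity
  set A := f + s * (L * u ^ 2 * gaussTail u) with hA
  have hdiff : |A - f| ≤ s * (N * f) := by
    have h1 : A - f = s * (L * u ^ 2 * gaussTail u) := by rw [hA]; ring
    rw [h1, abs_mul, abs_of_nonneg hs0, abs_mul, abs_mul, abs_of_nonneg (sq_nonneg u),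
      abs_of_nonneg (gaussTail_nonneg u)]
    refine mul_le_mul_of_nonneg_left ?_ hs0
    calc |L| * u ^ 2 * gaussTail u ≤ |L| * u ^ 2 * (√π * f) := by
          gcongr
          exact gaussTail_le hu
      _ = N * f := by rw [hN]; ring
  have hle : s * (N * f) ≤ N * f := mul_le_of_le_one_left (by positivity) hs1
  have hAabs : |A| ≤ (1 + N) * f := by
    have := abs_add_le (A - f) f
    rw [sub_add_cancel, abs_of_pos hf0] at this
    linarith
  have hfabs : |f| ≤ (1 + N) * f := by
    rw [abs_of_pos hf0]
    nlinarith
  have hpow : |A| ^ k ≤ (1 + N) ^ k * f ^ k := by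
    rw [← mul_pow]
    gcongr
  have hsub : |A ^ k - f ^ k| ≤ s * (N * k * (1 + N) ^ k * f ^ k) := by
    rcases Nat.eq_zero_or_pos k with rfl | hk
    · simp
    calc |A ^ k - f ^ k| ≤ |A - f| * k * max |A| |f| ^ (k - 1) := abs_pow_sub_pow_le ..
      _ ≤ s * (N * f) * k * ((1 + N) * f) ^ (k - 1) := by
          gcongr
          exact max_le hAabs hfabs
      _ = s * (N * k * (1 + N) ^ (k - 1) * f ^ k) := by
          obtain ⟨j, rfl⟩ := Nat.exists_eq_add_of_lt hk
          simp only [zero_add, Nat.add_sub_cancel, mul_pow]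
          ring
      _ ≤ s * (N * k * (1 + N) ^ k * f ^ k) := by
          gcongr
          · linarith
          · omega
  have hrest : |A ^ k * (s * (u * L))| ≤ s * (|L| * u * ((1 + N) ^ k * f ^ k)) := by
    rw [abs_mul, abs_mul, abs_mul, abs_pow, abs_of_nonneg hs0, abs_of_nonneg hu]
    calc |A| ^ k * (s * (u * |L|)) ≤ ((1 + N) ^ k * f ^ k) * (s * (u * |L|)) := by gcongr
      _ = _ := by ring
  have hsplit : scaledIntegrand k L s u - f ^ k = (A ^ k - f ^ k) - A ^ k * (s * (u * L)) := by
    unfold scaledIntegrand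
    ring
  rw [hsplit]
  calc _ ≤ |A ^ k - f ^ k| + |A ^ k * (s * (u * L))| := abs_sub _ _
    _ ≤ _ := add_le_add hsub hrest
    _ = _ := by ring

lemma hasDerivAt_scaledIntegrand (k : ℕ) (L u : ℝ) :
    HasDerivAt (fun s => scaledIntegrand k L s u)
      (L * (k * (u ^ 2 * Real.exp (-u ^ 2) ^ (k - 1) * gaussTail u)
        - u * Real.exp (-u ^ 2) ^ k)) 0 := by
  have h1 : HasDerivAt (fun s : ℝ => Real.exp (-u ^ 2) + s * (L * u ^ 2 * gaussTail u))
      (L * u ^ 2 * gaussTail u) 0 := by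
    simpa using ((hasDerivAt_id (0:ℝ)).mul_const (L * u ^ 2 * gaussTail u)).const_add
      (Real.exp (-u ^ 2))
  have h2 : HasDerivAt (fun s : ℝ => 1 - s * (u * L)) (-(u * L)) 0 := by
    simpa using ((hasDerivAt_id (0:ℝ)).mul_const (u * L)).const_sub 1
  refine ((h1.pow k).mul h2).congr_deriv ?_
  simp
  ring

lemma exp_neg_sq_pow (u : ℝ) (n : ℕ) :
    Real.exp (-u ^ 2) ^ n = Real.exp (-(n:ℝ) * u ^ 2) := by
  rw [← Real.exp_nat_mul]
  ring_nf

lemma integrableOn_sq_mul_exp_mul_gaussTail {a : ℝ} (ha : 0 < a) :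
    IntegrableOn (fun u => u ^ 2 * Real.exp (-a * u ^ 2) * gaussTail u) (Set.Ioi 0) := by
  have hc := continuous_gaussTail
  refine Integrable.mono' ((integrable_pow_mul_exp_neg_mul_sq ha 2).mul_const (√π)).integrableOn
    (by fun_prop) ?_
  filter_upwards [ae_restrict_mem measurableSet_Ioi] with u hu
  have hu : 0 < u := hu
  rw [Real.norm_of_nonneg (mul_nonneg (by positivity) (gaussTail_nonneg u))]
  gcongr
  calc gaussTail u ≤ √π * Real.exp (-u ^ 2) := gaussTail_le hu.le
    _ ≤ √π * 1 := by
        gcongr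
        exact Real.exp_le_one_iff.2 (by nlinarith)
    _ = √π := mul_one _

/-- First-order expansion of the rescaled integral, for any cutoff `T` growing at least like a
negative power of `s`. -/
lemma tendsto_integral_scaledIntegrand {k : ℕ} (hk : 2 ≤ k) (L : ℝ) {T : ℝ → ℝ} {m : ℕ}
    (hT : Tendsto T (𝓝[>] 0) atTop) (hTm : ∀ᶠ s in 𝓝[>] (0:ℝ), s⁻¹ ≤ T s ^ m) :
    Tendsto (fun s => s⁻¹ * ((∫ u in Set.Ioc 0 (T s), scaledIntegrand k L s u) - √(π / k) / 2))
      (𝓝[>] 0)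
      (𝓝 (L * (k * (1 / 2 * (π / (4 * (((k:ℝ) - 1) * √((k:ℝ) - 1)))
        - 1 / (2 * ((k:ℝ) - 1 + 1) * ((k:ℝ) - 1))
        - Real.arctan (1 / √((k:ℝ) - 1)) / (2 * (((k:ℝ) - 1) * √((k:ℝ) - 1)))))
        - 1 / (2 * k)))) := by
  have hk2 : (2:ℝ) ≤ k := by exact_mod_cast hk
  have hk0 : (0:ℝ) < k := by linarith
  have ha : (0:ℝ) < (k:ℝ) - 1 := by linarith
  have hcast : (((k - 1 : ℕ)) : ℝ) = (k:ℝ) - 1 := by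
    rw [Nat.cast_sub (by omega), Nat.cast_one]
  let Q : Polynomial ℝ :=
    .C (|L| * √π) * .X ^ 2 * .C (k:ℝ) * (1 + .C (|L| * √π) * .X ^ 2) ^ k
      + .C |L| * .X * (1 + .C (|L| * √π) * .X ^ 2) ^ k + .X ^ m
  have hQ (u : ℝ) : Q.eval u = |L| * √π * u ^ 2 * k * (1 + |L| * √π * u ^ 2) ^ k
      + |L| * u * (1 + |L| * √π * u ^ 2) ^ k + u ^ m := by
    simp [Q]
  have hgauss : Integrable (fun u : ℝ => Real.exp (-u ^ 2) ^ k) := by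
    simp_rw [exp_neg_sq_pow]
    exact integrable_exp_neg_mul_sq hk0
  have key : Tendsto (fun s => ∫ u in Set.Ioi (0:ℝ),
      s⁻¹ * ((Set.Iic (T s)).indicator (scaledIntegrand k L s) u - Real.exp (-u ^ 2) ^ k))
      (𝓝[>] 0) (𝓝 (∫ u in Set.Ioi (0:ℝ),
        L * (k * (u ^ 2 * Real.exp (-u ^ 2) ^ (k - 1) * gaussTail u)
        - u * Real.exp (-u ^ 2) ^ k))) := by
    refine tendsto_integral_filter_of_dominated_convergence
      (fun u => Q.eval u * Real.exp (-(k:ℝ) * u ^ 2)) ?_ ?_ ?_ ?_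
    · refine Eventually.of_forall fun s => Measurable.aestronglyMeasurable ?_
      have := ((continuous_scaledIntegrand k L s).measurable).indicator
        (measurableSet_Iic (a := T s))
      fun_prop
    · filter_upwards [hTm, Ioc_mem_nhdsGT (zero_lt_one' ℝ), hT.eventually_ge_atTop 0]
        with s hs hs01 hT0
      filter_upwards [ae_restrict_mem measurableSet_Ioi] with u hu
      have hu : 0 < u := hu
      have hs0 : 0 < s := hs01.1
      rw [← exp_neg_sq_pow, hQ, norm_mul, Real.norm_of_nonneg (inv_pos.2 hs0).le, Real.norm_eq_abs]
      by_cases hm : u ∈ Set.Iic (T s)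
      · rw [Set.indicator_of_mem hm, inv_mul_le_iff₀ hs0]
        refine (abs_scaledIntegrand_sub_le k L hs0.le hs01.2 hu.le).trans ?_
        refine mul_le_mul_of_nonneg_left ?_ hs0.le
        refine mul_le_mul_of_nonneg_right ?_ (by positivity)
        exact le_add_of_nonneg_right (by positivity)
      · rw [Set.indicator_of_notMem hm, zero_sub, abs_neg, abs_of_pos (by positivity)]
        have hTu : T s ≤ u := (not_le.1 hm).le
        gcongr
        calc s⁻¹ ≤ T s ^ m := hs
          _ ≤ u ^ m := by gcongr
          _ ≤ _ := le_add_of_nonneg_left (by positivity)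
    · exact (integrable_eval_mul_exp_neg_mul_sq hk0 Q).integrableOn
    · refine Eventually.of_forall fun u => ?_
      have h := (hasDerivAt_scaledIntegrand k L u).tendsto_slope_zero_right
      refine h.congr' ?_
      filter_upwards [hT.eventually_ge_atTop u] with s hs
      rw [Set.indicator_of_mem (Set.mem_Iic.2 hs)]
      simp [scaledIntegrand]
  have hlim : ∫ u in Set.Ioi (0:ℝ), L * (k * (u ^ 2 * Real.exp (-u ^ 2) ^ (k - 1) * gaussTail u)
        - u * Real.exp (-u ^ 2) ^ k) = L * (k * (1 / 2 * (π / (4 * (((k:ℝ) - 1) * √((k:ℝ) - 1)))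
        - 1 / (2 * ((k:ℝ) - 1 + 1) * ((k:ℝ) - 1))
        - Real.arctan (1 / √((k:ℝ) - 1)) / (2 * (((k:ℝ) - 1) * √((k:ℝ) - 1)))))
        - 1 / (2 * k)) := by
    simp_rw [exp_neg_sq_pow, hcast]
    rw [integral_const_mul, integral_sub, integral_const_mul,
      integral_sq_mul_exp_mul_gaussTail ha, integral_id_mul_exp_neg_mul_sq hk0]
    · exact (integrableOn_sq_mul_exp_mul_gaussTail ha).const_mul _
    · simpa using (integrable_pow_mul_exp_neg_mul_sq hk0 1).integrableOn.integrable (s := Set.Ioi 0)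
  rw [hlim] at key
  refine key.congr fun s => ?_
  rw [integral_const_mul, integral_sub, setIntegral_indicator measurableSet_Iic,
    Set.Ioi_inter_Iic]
  · simp_rw [exp_neg_sq_pow]
    rw [integral_gaussian_Ioi]
  · rw [integrable_indicator_iff measurableSet_Iic, IntegrableOn,
      Measure.restrict_restrict measurableSet_Iic, Set.Iic_inter_Ioi]
    exact (continuous_scaledIntegrand k L s).integrableOn_Ioc
  · exact hgauss.integrableOn

lemma integral_eq_sqrt_mul_integral_scaledIntegrand (k : ℕ) (L ε : ℝ) {t : ℝ} (ht : 0 < t) :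
    ∫ r in Set.Ioc (0:ℝ) (t ^ ε),
      (Real.exp (-r ^ 2 / t) + L * r ^ 2 * t ^ (-(1:ℝ)/2) *
        ∫ η in Set.Ioi (r * t ^ (-(1:ℝ)/2)), Real.exp (-η ^ 2)) ^ k * (1 - r * L) =
    √t * ∫ u in Set.Ioc 0 (√t ^ (2 * ε - 1)), scaledIntegrand k L (√t) u := by
  have hs : 0 < √t := Real.sqrt_pos.2 ht
  have hsq : √t ^ 2 = t := Real.sq_sqrt ht.le
  have hhalf : t ^ (-(1:ℝ)/2) = (√t)⁻¹ := by
    rw [Real.sqrt_eq_rpow, ← Real.rpow_neg ht.le]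
    norm_num
  have hend : t ^ ε = √t * √t ^ (2 * ε - 1) := by
    rw [Real.rpow_sub_one hs.ne', mul_div_cancel₀ _ hs.ne', Real.sqrt_eq_rpow,
      ← Real.rpow_mul ht.le]
    ring_nf
  rw [hhalf, hend, ← intervalIntegral.integral_of_le (by positivity),
    ← intervalIntegral.integral_of_le (by positivity)]
  nth_rewrite 1 [← mul_zero (√t)]
  rw [← intervalIntegral.mul_integral_comp_mul_left]
  congr 1
  refine intervalIntegral.integral_congr fun u _ => ?_
  have e1 : -(√t * u) ^ 2 / t = -u ^ 2 := by
    rw [mul_pow, hsq]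
    field_simp
  have e2 : √t * u * (√t)⁻¹ = u := by field_simp
  have e3 : L * (√t * u) ^ 2 * (√t)⁻¹ = √t * (L * u ^ 2) := by field_simp
  simp only [scaledIntegrand, gaussTail, e1, e2, e3]
  ring

theorem pinned_sausage_boundary_expansion (k : ℕ) (hk : 2 ≤ k) (L ε : ℝ)
    (hε1 : 2/5 < ε) (hε2 : ε < 1/2) :
    (fun t : ℝ =>
        (∫ r in Set.Ioc (0:ℝ) (t ^ ε),
            (Real.exp (-r ^ 2 / t) +
              L * r ^ 2 * t ^ (-(1:ℝ)/2) *
                ∫ η in Set.Ioi (r * t ^ (-(1:ℝ)/2)), Real.exp (-η ^ 2)) ^ k *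
              (1 - r * L))
          - ((1 / 2) * Real.sqrt (Real.pi * t / k) +
              t * L * (-(1 / (2 * (k:ℝ))) +
                ((k:ℝ) / 2) *
                  (Real.pi / (4 * ((k:ℝ) - 1) ^ ((3:ℝ)/2))
                    - 1 / (2 * (k:ℝ) * ((k:ℝ) - 1))
                    - Real.arctan (((k:ℝ) - 1) ^ (-(1:ℝ)/2)) /
                        (2 * ((k:ℝ) - 1) ^ ((3:ℝ)/2))))))
      =o[𝓝[>] (0:ℝ)] fun t => t := by
  have hk2 : (2:ℝ) ≤ k := by exact_mod_cast hk
  have ha : (0:ℝ) < (k:ℝ) - 1 := by linarith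
  obtain ⟨m, hm⟩ := exists_nat_ge (1 / (1 - 2 * ε))
  have hT : Tendsto (fun s : ℝ => s ^ (2 * ε - 1)) (𝓝[>] 0) atTop :=
    tendsto_rpow_neg_nhdsGT_zero (by linarith)
  have hTm : ∀ᶠ s in 𝓝[>] (0:ℝ), s⁻¹ ≤ (s ^ (2 * ε - 1)) ^ m := by
    filter_upwards [Ioc_mem_nhdsGT (zero_lt_one' ℝ)] with s hs
    rw [← Real.rpow_mul_natCast hs.1.le, ← Real.rpow_neg_one]
    refine Real.rpow_le_rpow_of_exponent_ge hs.1 hs.2 ?_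
    rw [div_le_iff₀ (by linarith)] at hm
    linarith
  have hsqrt : Tendsto Real.sqrt (𝓝[>] 0) (𝓝[>] 0) := by
    refine tendsto_nhdsWithin_iff.2 ⟨?_, ?_⟩
    · simpa using (Real.continuous_sqrt.tendsto 0).mono_left nhdsWithin_le_nhds
    · filter_upwards [self_mem_nhdsWithin] with t ht using Real.sqrt_pos.2 ht
  have key := ((tendsto_integral_scaledIntegrand hk L hT hTm).comp hsqrt).sub_const
    (L * (k * (1 / 2 * (π / (4 * (((k:ℝ) - 1) * √((k:ℝ) - 1)))
        - 1 / (2 * ((k:ℝ) - 1 + 1) * ((k:ℝ) - 1))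
        - Real.arctan (1 / √((k:ℝ) - 1)) / (2 * (((k:ℝ) - 1) * √((k:ℝ) - 1)))))
        - 1 / (2 * k)))
  rw [sub_self] at key
  have hpow : ((k:ℝ) - 1) ^ ((3:ℝ)/2) = ((k:ℝ) - 1) * √((k:ℝ) - 1) := by
    rw [Real.sqrt_eq_rpow, ← Real.rpow_one_add' ha.le (by norm_num)]
    norm_num
  have hinv : ((k:ℝ) - 1) ^ (-(1:ℝ)/2) = 1 / √((k:ℝ) - 1) := by
    rw [Real.sqrt_eq_rpow, one_div, ← Real.rpow_neg ha.le]
    norm_num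
  rw [hpow, hinv, Asymptotics.isLittleO_iff_tendsto'
    (by filter_upwards [self_mem_nhdsWithin] with t ht h using absurd h (ne_of_gt ht))]
  refine key.congr' ?_
  filter_upwards [self_mem_nhdsWithin] with t ht
  have ht : 0 < t := ht
  have hs : 0 < √t := Real.sqrt_pos.2 ht
  have hroot : √(π * t / k) = √t * √(π / k) := by
    rw [← Real.sqrt_mul ht.le]
    ring_nf
  rw [integral_eq_sqrt_mul_integral_scaledIntegrand k L ε ht, hroot, eq_div_iff ht.ne']
  have hsq : (√t)⁻¹ * t = √t := by
    rw [inv_mul_eq_div, Real.div_sqrt]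
  simp only [Function.comp, sub_add_cancel]
  rw [sub_mul, mul_right_comm, hsq]
  ring
end

section
/- For every positive integer k, ∫₀^∞ r (∫_r^∞ e^{−η²} dη)^k dr = (1/2) Γ((k+2)/2) ∫_{[1,∞)^k} (η₁² + ⋯ + η_k²)^{−(k+2)/2} dη₁ ⋯ dη_k, and both sides are finite. -/
open MeasureTheory Real Finset

/-- Scaling identity for powers of the Gaussian tail. -/
lemma integral_pi_Ici_exp_neg_mul_sum_sq {r : ℝ} (hr : 0 < r) (k : ℕ) :
    ∫ η : Fin k → ℝ, r ^ (k + 1) * Real.exp (-r ^ 2 * ∑ i, η i ^ 2)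
        ∂(Measure.pi fun _ => volume.restrict (Set.Ici (1:ℝ))) =
      r * (∫ η in Set.Ioi r, Real.exp (-η ^ 2)) ^ k := by
  have hprod (η : Fin k → ℝ) :
      Real.exp (-r ^ 2 * ∑ i, η i ^ 2) = ∏ i, Real.exp (-(r * η i) ^ 2) := by
    rw [← Real.exp_sum, Finset.mul_sum]
    congr 1
    exact Finset.sum_congr rfl fun i _ => by ring
  have hscale := integral_comp_mul_left_Ioi (fun x => Real.exp (-x ^ 2)) 1 hr
  rw [mul_one, smul_eq_mul] at hscale
  simp_rw [hprod]
  rw [integral_const_mul,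
    integral_fintype_prod_eq_pow (𝕜 := ℝ) (fun x : ℝ => Real.exp (-(r * x) ^ 2)),
    Fintype.card_fin, integral_Ici_eq_integral_Ioi, hscale, mul_pow, inv_pow]
  field_simp
  ring

lemma integrable_pi_Ici_exp_neg_mul_sum_sq {r : ℝ} (hr : 0 < r) (k : ℕ) :
    Integrable (fun η : Fin k → ℝ => r ^ (k + 1) * Real.exp (-r ^ 2 * ∑ i, η i ^ 2))
      (Measure.pi fun _ => volume.restrict (Set.Ici (1:ℝ))) := by
  have h := (Integrable.fintype_prod (ι := Fin k) (𝕜 := ℝ)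
    (μ := fun _ => volume.restrict (Set.Ici (1:ℝ)))
    (f := fun _ x => Real.exp (-r ^ 2 * x ^ 2))
    fun _ => (integrable_exp_neg_mul_sq (by positivity : 0 < r ^ 2)).restrict)
  simp_rw [← Real.exp_sum, ← Finset.mul_sum] at h
  exact h.const_mul _

lemma integral_Ioi_exp_neg_sq_le {r : ℝ} (hr : 0 ≤ r) :
    ∫ η in Set.Ioi r, Real.exp (-η ^ 2) ≤
      Real.exp (-(1 / 2) * r ^ 2) * ∫ η : ℝ, Real.exp (-(1 / 2) * η ^ 2) := by
  have hint := integrable_exp_neg_mul_sq (by norm_num : (0:ℝ) < 1 / 2)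
  have hint' : Integrable fun η : ℝ => Real.exp (-η ^ 2) := by
    simpa using integrable_exp_neg_mul_sq one_pos
  rw [← integral_const_mul]
  refine (setIntegral_mono_on hint'.integrableOn (hint.const_mul _).integrableOn
    measurableSet_Ioi fun η hη => ?_).trans
    (setIntegral_le_integral (hint.const_mul _) (ae_of_all _ fun η => by positivity))
  rw [← Real.exp_add, Real.exp_le_exp]
  have hη' : r < η := hη
  nlinarith

lemma measurable_integral_Ioi_exp_neg_sq :
    Measurable fun r : ℝ => ∫ η in Set.Ioi r, Real.exp (-η ^ 2) := by
  have hint : Integrable fun η : ℝ => Real.exp (-η ^ 2) := by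
    simpa using integrable_exp_neg_mul_sq one_pos
  refine Antitone.measurable fun a b hab => ?_
  exact setIntegral_mono_set hint.integrableOn (ae_of_all _ fun η => by positivity)
    (Set.Ioi_subset_Ioi hab).eventuallyLE

lemma integrableOn_mul_gaussian_tail_pow {k : ℕ} (hk : 1 ≤ k) :
    IntegrableOn (fun r => r * (∫ η in Set.Ioi r, Real.exp (-η ^ 2)) ^ k)
      (Set.Ioi (0:ℝ)) := by
  set D := ∫ η : ℝ, Real.exp (-(1 / 2) * η ^ 2)
  have hD : 0 ≤ D := integral_nonneg fun η => by positivity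
  have hdom : Integrable fun r : ℝ => D ^ k * (r * Real.exp (-(1 / 2) * r ^ 2)) :=
    (integrable_mul_exp_neg_mul_sq (by norm_num : (0:ℝ) < 1 / 2)).const_mul _
  refine Integrable.mono' hdom.integrableOn
    (measurable_id.mul (measurable_integral_Ioi_exp_neg_sq.pow_const k)).aestronglyMeasurable ?_
  filter_upwards [ae_restrict_mem measurableSet_Ioi] with r hr
  have hr' : 0 < r := hr
  have htail : 0 ≤ ∫ η in Set.Ioi r, Real.exp (-η ^ 2) := integral_nonneg fun η => by positivity
  rw [Real.norm_of_nonneg (by positivity)]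
  calc r * (∫ η in Set.Ioi r, Real.exp (-η ^ 2)) ^ k
      ≤ r * (Real.exp (-(1 / 2) * r ^ 2) * D) ^ k := by
        gcongr
        exact integral_Ioi_exp_neg_sq_le hr'.le
    _ = D ^ k * (r * Real.exp (-(1 / 2) * r ^ 2) ^ k) := by ring
    _ ≤ D ^ k * (r * Real.exp (-(1 / 2) * r ^ 2)) := by
        gcongr
        exact pow_le_of_le_one (by positivity)
          (Real.exp_le_one_iff.2 (by nlinarith [sq_nonneg r])) (by omega)

lemma integral_Ioi_pow_mul_exp_neg_sq_mul {s : ℝ} (hs : 0 < s) (k : ℕ) :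
    ∫ r in Set.Ioi (0:ℝ), r ^ (k + 1) * Real.exp (-r ^ 2 * s) =
      (1 / 2) * Real.Gamma (((k : ℝ) + 2) / 2) * s ^ (-((k : ℝ) + 2) / 2) := by
  have h := integral_rpow_mul_exp_neg_mul_rpow (p := 2) (q := (k : ℝ) + 1) (b := s) two_pos
    (by linarith [Nat.cast_nonneg (α := ℝ) k]) hs
  rw [show (k : ℝ) + 1 + 1 = k + 2 by ring] at h
  rw [show (1 / 2) * Real.Gamma (((k : ℝ) + 2) / 2) * s ^ (-((k : ℝ) + 2) / 2) =
    s ^ (-((k : ℝ) + 2) / 2) * (1 / 2) * Real.Gamma (((k : ℝ) + 2) / 2) by ring, ← h]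
  refine integral_congr_ae (ae_of_all _ fun r => ?_)
  have hpow : r ^ ((k : ℝ) + 1) = r ^ (k + 1) := by
    rw [← Real.rpow_natCast]; push_cast; rfl
  simp only [hpow, Real.rpow_two]
  ring_nf

theorem integral_r_mul_gaussian_tail_pow (k : ℕ) (hk : 1 ≤ k) :
    (∫ r in Set.Ioi (0:ℝ), r * (∫ η in Set.Ioi r, Real.exp (-η ^ 2)) ^ k)
        = (1 / 2) * Real.Gamma (((k : ℝ) + 2) / 2) *
            ∫ η in Set.univ.pi (fun _ : Fin k => Set.Ici (1:ℝ)),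
              (∑ i, (η i) ^ 2) ^ (-((k : ℝ) + 2) / 2) ∧
    IntegrableOn (fun r => r * (∫ η in Set.Ioi r, Real.exp (-η ^ 2)) ^ k)
      (Set.Ioi (0:ℝ)) ∧
    IntegrableOn (fun η : Fin k → ℝ => (∑ i, (η i) ^ 2) ^ (-((k : ℝ) + 2) / 2))
      (Set.univ.pi fun _ : Fin k => Set.Ici (1:ℝ)) volume := by
  have hI := integrableOn_mul_gaussian_tail_pow hk
  set ν : Measure (Fin k → ℝ) := Measure.pi fun _ => volume.restrict (Set.Ici (1:ℝ))
  have hrestrict : volume.restrict (Set.univ.pi fun _ : Fin k => Set.Ici (1:ℝ)) = ν := by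
    rw [volume_pi, Measure.restrict_pi_pi]
  have hF : Integrable (Function.uncurry fun (r : ℝ) (η : Fin k → ℝ) =>
      r ^ (k + 1) * Real.exp (-r ^ 2 * ∑ i, η i ^ 2))
      ((volume.restrict (Set.Ioi (0:ℝ))).prod ν) := by
    refine (integrable_prod_iff ?_).2 ⟨?_, ?_⟩
    · refine Continuous.aestronglyMeasurable ?_
      unfold Function.uncurry
      fun_prop
    · filter_upwards [ae_restrict_mem measurableSet_Ioi] with r hr
      exact integrable_pi_Ici_exp_neg_mul_sum_sq hr k
    · refine Integrable.congr hI ?_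
      filter_upwards [ae_restrict_mem measurableSet_Ioi] with r hr
      have hr' : 0 < r := hr
      rw [← integral_pi_Ici_exp_neg_mul_sum_sq hr']
      refine integral_congr_ae (ae_of_all _ fun η => ?_)
      exact (Real.norm_of_nonneg (by positivity)).symm
  have hinner : ∀ᵐ η ∂ν, ∫ r in Set.Ioi (0:ℝ), r ^ (k + 1) * Real.exp (-r ^ 2 * ∑ i, η i ^ 2) =
      (1 / 2) * Real.Gamma (((k : ℝ) + 2) / 2) * (∑ i, η i ^ 2) ^ (-((k : ℝ) + 2) / 2) := by
    rw [← hrestrict]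
    filter_upwards [ae_restrict_mem (MeasurableSet.univ_pi fun _ => measurableSet_Ici)] with η hη
    refine integral_Ioi_pow_mul_exp_neg_sq_mul ?_ k
    refine Finset.sum_pos (fun i _ => ?_) ⟨⟨0, hk⟩, Finset.mem_univ _⟩
    have hi : 1 ≤ η i := hη i (Set.mem_univ i)
    positivity
  have hΓ : (1 / 2) * Real.Gamma (((k : ℝ) + 2) / 2) ≠ 0 :=
    mul_ne_zero (by norm_num) (Real.Gamma_pos_of_pos (by positivity)).ne'
  refine ⟨?_, hI, ?_⟩
  · rw [hrestrict, ← integral_const_mul, ← integral_congr_ae hinner,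
      ← integral_integral_swap hF]
    exact setIntegral_congr_fun measurableSet_Ioi fun r hr =>
      (integral_pi_Ici_exp_neg_mul_sum_sq hr k).symm
  · rw [IntegrableOn, hrestrict, ← integrable_const_mul_iff (IsUnit.mk0 _ hΓ)]
    exact hF.integral_prod_right.congr hinner
end
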